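/- Let n > 4, let G = K_n with vertices v₁, …, v_n, and let H = K_n - {e_{2,4}, …, e_{2,n}} be K_n with the n - 3 edges joining v₂ to v₄, …, v_n removed (so v₂ has degree 2 in H, adjacent only to v₁ and v₃). Let T₁ be the star spanning tree centered at v₁ and let T₂ = (T₁ - {(v₁,v₂)}) ∪ {(v₂,v₃)}. Then T₁ and T₂ are spanning trees of both G and H, ∩_G(T₁) < ∩_G(T₂), and ∩_H(T₁) = ∩_H(T₂). -/

import Mathlib

open SimpleGraph

/-- The set of edges lying on some path (in a tree: the unique path) between `x` and `y`
in the graph `T`. -/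
def pathEdges {V : Type*} (T : SimpleGraph V) (x y : V) : Set (Sym2 V) :=
  {f | ∃ p : T.Walk x y, p.IsPath ∧ f ∈ p.edges}

/-- The edge set of the tree-cycle induced (in the spanning tree `T`) by the cycle-edge `e`:
the edge `e` itself together with the edges of the (unique) path in `T` between
the endpoints of `e`. -/
def cycEdges {V : Type*} (T : SimpleGraph V) (e : Sym2 V) : Set (Sym2 V) :=
  insert e {f | ∃ x y, e = s(x, y) ∧ f ∈ pathEdges T x y}

/-- The vertex set of the tree-cycle induced (in the spanning tree `T`) by the
cycle-edge `e`. -/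
def cycVerts {V : Type*} (T : SimpleGraph V) (e : Sym2 V) : Set V :=
  {v | ∃ x y, e = s(x, y) ∧ ∃ p : T.Walk x y, p.IsPath ∧ v ∈ p.support}

/-- Two tree-cycles (induced by the cycle-edges `e` and `f`) have non-empty intersection:
some edge of `T` belongs to both of them. -/
def cyclesIntersect {V : Type*} (T : SimpleGraph V) (e f : Sym2 V) : Prop :=
  (cycEdges T e ∩ cycEdges T f ∩ T.edgeSet).Nonempty

/-- The cycle intersection number `∩_T(c)` of the tree-cycle `c` induced by the
cycle-edge `e`: the number of tree-cycles distinct from `c` whose intersection with `c`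
is non-empty. -/
noncomputable def cycleInterNum {V : Type*} (G T : SimpleGraph V) (e : Sym2 V) : ℕ :=
  {f | f ∈ G.edgeSet \ T.edgeSet ∧ f ≠ e ∧ cyclesIntersect T e f}.ncard

/-- The tree intersection number `∩_G(T)`: the number of unordered pairs of distinct
tree-cycles of `T` whose intersection is non-empty. -/
noncomputable def treeInterNum {V : Type*} (G T : SimpleGraph V) : ℕ :=
  {p : Sym2 (Sym2 V) | ∃ e f : Sym2 V, p = s(e, f) ∧ e ≠ f ∧
    e ∈ G.edgeSet \ T.edgeSet ∧ f ∈ G.edgeSet \ T.edgeSet ∧ cyclesIntersect T e f}.ncard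

/-- `T` is a star spanning tree of `G` with center `v`. -/
def IsStarSpanningTree {V : Type*} (G T : SimpleGraph V) (v : V) : Prop :=
  T ≤ G ∧ T.IsTree ∧ ∀ u, u ≠ v → T.Adj v u

/-- `closest-point-set(w, c)`: the set of vertices outside the tree-cycle `c` (induced by
the cycle-edge `e`) whose closest point on `c` (with respect to distance in `T`) is `w`. -/
def closestPointSet {V : Type*} (T : SimpleGraph V) (e : Sym2 V) (w : V) : Set V :=
  {v | v ∉ cycVerts T e ∧ ∀ u ∈ cycVerts T e, T.dist v w ≤ T.dist v u}

/-!
In the star with centre `c`, the tree-cycle of a cycle-edge `ab` has the tree edges `ca` and `cb`,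
so two tree-cycles intersect exactly when their cycle-edges share an endpoint. Now move the leaf
`v` from `c` to `w`. Exchanging `cv` with `vw` matches the tree edges and the cycle-edges of the two
trees. Under this matching a tree-cycle whose cycle-edge contains `v` runs through `cw` as well, as
if its cycle-edge also contained `w`, and every other tree-cycle keeps its tree edges. Hence all old
intersections survive, and the new ones are between a cycle-edge at `v` and a disjoint one at `w`.
In `K_n` there are such pairs, for instance `vb` and `wd`; if `v` has no neighbours besides `c` and
`w`, there are none.
-/

section TreeCycles

variable {V V' : Type*} {G T : SimpleGraph V} {G' T' : SimpleGraph V'} {e f : Sym2 V}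

theorem cycEdges_inter_edgeSet {a b : V} (hT : T.IsAcyclic) {p : T.Walk a b} (hp : p.IsPath)
    (hab : ¬T.Adj a b) : cycEdges T s(a, b) ∩ T.edgeSet = p.edgeSet := by
  have eq_path {q : T.Walk a b} (hq : q.IsPath) : p = q :=
    congrArg Subtype.val ((hT.subsingleton_path a b).elim ⟨p, hp⟩ ⟨q, hq⟩)
  ext g
  constructor
  · rintro ⟨rfl | ⟨x, y, hxy, q, hq, hgq⟩, hg⟩
    · exact absurd hg hab
    · rcases Sym2.eq_iff.1 hxy with ⟨rfl, rfl⟩ | ⟨rfl, rfl⟩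
      · rwa [eq_path hq]
      · rw [eq_path hq.reverse]
        simpa using hgq
  · exact fun hg => ⟨.inr ⟨a, b, rfl, p, hp, hg⟩, p.edges_subset_edgeSet hg⟩

theorem cycEdges_inter_edgeSet_of_adj_of_adj {a x b : V} (hT : T.IsAcyclic) (hax : T.Adj a x)
    (hxb : T.Adj x b) (hab : a ≠ b) : cycEdges T s(a, b) ∩ T.edgeSet = {s(a, x), s(x, b)} := by
  let p : T.Walk a b := .cons hax (.cons hxb .nil)
  have hp : p.IsPath := by simp [p, hax.ne, hxb.ne, hab]
  have hadj : ¬T.Adj a b := fun h => by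
    have hlength := congrArg (fun q : T.Path a b => q.1.length)
      ((hT.subsingleton_path a b).elim ⟨p, hp⟩ (.singleton h))
    simp [p, Path.singleton] at hlength
  rw [cycEdges_inter_edgeSet hT hp hadj]
  simp [p]

theorem cyclesIntersect_comm : cyclesIntersect T e f ↔ cyclesIntersect T f e := by
  rw [cyclesIntersect, cyclesIntersect, Set.inter_comm (cycEdges T e)]

theorem cyclesIntersect_iff_of_eq_image {ι : Type*} {F : ι → Sym2 V} (hF : F.Injective)
    {A B : Set ι} (he : cycEdges T e ∩ T.edgeSet = F '' A)
    (hf : cycEdges T f ∩ T.edgeSet = F '' B) :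
    cyclesIntersect T e f ↔ (A ∩ B).Nonempty := by
  rw [cyclesIntersect, Set.inter_inter_distrib_right, he, hf, ← Set.image_inter hF,
    Set.image_nonempty]

/-- The set of unordered pairs of distinct cycle-edges of `T` in `G` whose tree-cycles intersect,
so that `∩_G(T)` is its cardinality. -/
def intersectingPairs (G T : SimpleGraph V) : Set (Sym2 (Sym2 V)) :=
  {p | ∃ e f : Sym2 V, p = s(e, f) ∧ e ≠ f ∧
    e ∈ G.edgeSet \ T.edgeSet ∧ f ∈ G.edgeSet \ T.edgeSet ∧ cyclesIntersect T e f}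

theorem ncard_intersectingPairs : (intersectingPairs G T).ncard = treeInterNum G T := rfl

theorem mk_mem_intersectingPairs :
    s(e, f) ∈ intersectingPairs G T ↔ e ≠ f ∧
      e ∈ G.edgeSet \ T.edgeSet ∧ f ∈ G.edgeSet \ T.edgeSet ∧ cyclesIntersect T e f := by
  refine ⟨?_, fun h => ⟨e, f, rfl, h⟩⟩
  rintro ⟨e', f', hp, hne, he, hf, hi⟩
  rcases Sym2.eq_iff.1 hp with ⟨rfl, rfl⟩ | ⟨rfl, rfl⟩
  · exact ⟨hne, he, hf, hi⟩
  · exact ⟨hne.symm, hf, he, cyclesIntersect_comm.1 hi⟩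

theorem ncard_preimage_intersectingPairs (φ : Sym2 V ≃ Sym2 V') :
    (Sym2.map φ ⁻¹' intersectingPairs G' T').ncard = treeInterNum G' T' :=
  Set.ncard_preimage_of_injective_subset_range (Sym2.map.injective φ.injective)
    (by rintro ⟨e, f⟩ _; exact ⟨s(φ.symm e, φ.symm f), by simp⟩)

theorem treeInterNum_eq_of_equiv (φ : Sym2 V ≃ Sym2 V')
    (hφ : ∀ e, φ e ∈ G'.edgeSet \ T'.edgeSet ↔ e ∈ G.edgeSet \ T.edgeSet)
    (hinter : ∀ e ∈ G.edgeSet \ T.edgeSet, ∀ f ∈ G.edgeSet \ T.edgeSet,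
      (cyclesIntersect T e f ↔ cyclesIntersect T' (φ e) (φ f))) :
    treeInterNum G T = treeInterNum G' T' := by
  rw [← ncard_intersectingPairs, ← ncard_preimage_intersectingPairs φ]
  congr 1
  ext ⟨e, f⟩
  simp only [Set.mem_preimage, Sym2.map_mk, mk_mem_intersectingPairs, hφ, φ.injective.ne_iff]
  grind

theorem treeInterNum_lt_of_equiv [Finite V] (φ : Sym2 V ≃ Sym2 V')
    (hφ : ∀ e, φ e ∈ G'.edgeSet \ T'.edgeSet ↔ e ∈ G.edgeSet \ T.edgeSet)
    (hinter : ∀ e ∈ G.edgeSet \ T.edgeSet, ∀ f ∈ G.edgeSet \ T.edgeSet,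
      cyclesIntersect T e f → cyclesIntersect T' (φ e) (φ f))
    (he : e ∈ G.edgeSet \ T.edgeSet) (hf : f ∈ G.edgeSet \ T.edgeSet) (hne : e ≠ f)
    (hdisj : ¬cyclesIntersect T e f) (hmeet : cyclesIntersect T' (φ e) (φ f)) :
    treeInterNum G T < treeInterNum G' T' := by
  rw [← ncard_intersectingPairs, ← ncard_preimage_intersectingPairs φ]
  refine Set.ncard_lt_ncard (Set.ssubset_iff_exists.2 ⟨?_, s(e, f), ?_, ?_⟩) (Set.toFinite _)
  · rintro ⟨x, y⟩ hxy
    obtain ⟨hne, hx, hy, hi⟩ := mk_mem_intersectingPairs.1 hxy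
    exact mk_mem_intersectingPairs.2
      ⟨φ.injective.ne hne, (hφ x).2 hx, (hφ y).2 hy, hinter x hx y hy hi⟩
  · exact mk_mem_intersectingPairs.2 ⟨φ.injective.ne hne, (hφ e).2 he, (hφ f).2 hf, hmeet⟩
  · exact fun h => hdisj (mk_mem_intersectingPairs.1 h).2.2.2

end TreeCycles

section Star

variable {V : Type*} {G : SimpleGraph V} {c : V} {e f : Sym2 V}

theorem exists_mk_eq_mk_iff {P : V → Prop} {a b : V} :
    (∃ u, P u ∧ s(a, b) = s(c, u)) ↔ a = c ∧ P b ∨ b = c ∧ P a := by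
  simp only [Sym2.eq_iff]
  grind

theorem starGraph_eq_fromEdgeSet (c : V) :
    starGraph c = fromEdgeSet {f | ∃ u, u ≠ c ∧ f = s(c, u)} := by
  ext a b
  simp only [starGraph_adj, fromEdgeSet_adj, Set.mem_ofPred_eq,
    exists_mk_eq_mk_iff (P := (· ≠ c))]
  grind

theorem mem_edgeSet_sdiff_starGraph :
    e ∈ G.edgeSet \ (starGraph c).edgeSet ↔ e ∈ G.edgeSet ∧ c ∉ e := by
  induction e with
  | _ a b =>
    simp only [Set.mem_sdiff, mem_edgeSet, starGraph_adj, Sym2.mem_iff]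
    have := G.ne_of_adj (a := a) (b := b)
    grind

theorem cycEdges_starGraph_inter_edgeSet (he : ¬e.IsDiag) (hc : c ∉ e) :
    cycEdges (starGraph c) e ∩ (starGraph c).edgeSet = (s(c, ·)) '' {u | u ∈ e} := by
  induction e with
  | _ a b =>
    rw [Sym2.mk_isDiag_iff] at he
    rw [Sym2.mem_iff, not_or] at hc
    rw [cycEdges_inter_edgeSet_of_adj_of_adj (isAcyclic_starGraph c) (starGraph_center_adj' hc.1)
      (starGraph_center_adj hc.2) he, Sym2.eq_swap (a := a)]
    have hverts : {u | u ∈ s(a, b)} = {a, b} := by ext; simp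
    rw [hverts, Set.image_pair]

theorem cyclesIntersect_starGraph (he : e ∈ G.edgeSet \ (starGraph c).edgeSet)
    (hf : f ∈ G.edgeSet \ (starGraph c).edgeSet) :
    cyclesIntersect (starGraph c) e f ↔ ∃ u, u ∈ e ∧ u ∈ f := by
  have cycEdges_eq {e} (he : e ∈ G.edgeSet \ (starGraph c).edgeSet) :=
    cycEdges_starGraph_inter_edgeSet (not_isDiag_of_mem_edgeSet _ he.1)
      (mem_edgeSet_sdiff_starGraph.1 he).2
  exact cyclesIntersect_iff_of_eq_image (fun _ _ => Sym2.congr_right.1)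
    (cycEdges_eq he) (cycEdges_eq hf)

end Star

section RehungStar

variable {V : Type*} {G : SimpleGraph V} {c v w : V} {e f : Sym2 V}

/-- The star centred at `c` with its leaf `v` detached from `c` and attached to `w` instead. -/
def rehungStar (c v w : V) : SimpleGraph V :=
  (starGraph c).deleteEdges {s(c, v)} ⊔ edge v w

theorem rehungStar_adj {a b : V} :
    (rehungStar c v w).Adj a b ↔
      a ≠ b ∧ (a = c ∧ b ≠ v ∨ b = c ∧ a ≠ v ∨ a = v ∧ b = w ∨ a = w ∧ b = v) := by
  simp only [rehungStar, sup_adj, deleteEdges_adj, starGraph_adj, edge_adj,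
    Set.mem_singleton_iff, Sym2.eq_iff]
  grind

theorem rehungStar_eq_fromEdgeSet (c v w : V) :
    rehungStar c v w = fromEdgeSet ({f | ∃ u, u ≠ c ∧ u ≠ v ∧ f = s(c, u)} ∪ {s(v, w)}) := by
  ext a b
  have spoke := exists_mk_eq_mk_iff (c := c) (P := fun u => u ≠ c ∧ u ≠ v) (a := a) (b := b)
  simp only [and_assoc] at spoke
  rw [rehungStar_adj, fromEdgeSet_adj, Set.mem_union, Set.mem_ofPred_eq, spoke,
    Set.mem_singleton_iff, Sym2.eq_iff]
  grind

theorem rehungStar_le (hG : starGraph c ≤ G) (hvw : G.Adj v w) : rehungStar c v w ≤ G :=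
  sup_le ((deleteEdges_le _).trans hG) ((edge_le_iff _).2 (.inr hvw))

theorem isAcyclic_rehungStar (hvc : v ≠ c) (hvw : v ≠ w) : (rehungStar c v w).IsAcyclic := by
  rw [rehungStar, edge_comm]
  refine ((isAcyclic_starGraph c).anti (deleteEdges_le _)).sup_edge_of_not_reachable ?_
  refine not_reachable_of_neighborSet_right_eq_empty hvw.symm ?_
  ext u
  simp only [mem_neighborSet, deleteEdges_adj, starGraph_adj, Set.mem_singleton_iff, Sym2.eq_iff,
    Set.mem_empty_iff_false]
  grind

theorem connected_rehungStar (hvw : v ≠ w) : (rehungStar c v w).Connected := by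
  have reachable_of_ne {u : V} (huv : u ≠ v) : (rehungStar c v w).Reachable c u := by
    by_cases huc : u = c
    · rw [huc]
    · exact Adj.reachable (rehungStar_adj.2 (by grind))
  refine (connected_iff_exists_forall_reachable _).2 ⟨c, fun u => ?_⟩
  by_cases huv : u = v
  · rw [huv]
    exact (reachable_of_ne hvw.symm).trans (Adj.reachable (rehungStar_adj.2 (by grind)))
  · exact reachable_of_ne huv

theorem isTree_rehungStar (hvc : v ≠ c) (hvw : v ≠ w) : (rehungStar c v w).IsTree :=
  ⟨connected_rehungStar hvw, isAcyclic_rehungStar hvc hvw⟩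

open Classical in
/-- The exchange of the pairs `cv` and `vw`. It maps `starGraph c` onto `rehungStar c v w`, and,
in a graph containing both trees, the cycle-edges of the former onto those of the latter. -/
noncomputable def rehang (c v w : V) : Equiv.Perm (Sym2 V) :=
  Equiv.swap s(c, v) s(v, w)

theorem rehang_mk_center_leaf : rehang c v w s(c, v) = s(v, w) := by
  simp [rehang]

theorem rehang_mk_leaf_new : rehang c v w s(v, w) = s(c, v) := by
  simp [rehang]

theorem rehang_of_ne (hcv : e ≠ s(c, v)) (hvw : e ≠ s(v, w)) : rehang c v w e = e := by
  classical exact Equiv.swap_apply_of_ne_of_ne hcv hvw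

theorem rehang_mem_edgeSet_iff (hcv : G.Adj c v) (hvw : G.Adj v w) :
    rehang c v w e ∈ G.edgeSet ↔ e ∈ G.edgeSet := by
  by_cases h₁ : e = s(c, v)
  · simp [h₁, rehang_mk_center_leaf, hcv, hvw]
  by_cases h₂ : e = s(v, w)
  · simp [h₂, rehang_mk_leaf_new, hcv, hvw]
  rw [rehang_of_ne h₁ h₂]

theorem rehang_mem_edgeSet_rehungStar_iff (hvc : v ≠ c) (hvw : v ≠ w) :
    rehang c v w e ∈ (rehungStar c v w).edgeSet ↔ e ∈ (starGraph c).edgeSet := by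
  by_cases h₁ : e = s(c, v)
  · rw [h₁, rehang_mk_center_leaf, mem_edgeSet, mem_edgeSet, rehungStar_adj, starGraph_adj]
    grind
  by_cases h₂ : e = s(v, w)
  · rw [h₂, rehang_mk_leaf_new, mem_edgeSet, mem_edgeSet, rehungStar_adj, starGraph_adj]
    grind
  rw [rehang_of_ne h₁ h₂]
  induction e with
  | _ a b =>
    rw [Sym2.eq_iff] at h₁ h₂
    rw [mem_edgeSet, mem_edgeSet, rehungStar_adj, starGraph_adj]
    grind

theorem rehang_mem_cycleEdges_iff (hcv : G.Adj c v) (hvw : G.Adj v w) :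
    rehang c v w e ∈ G.edgeSet \ (rehungStar c v w).edgeSet ↔
      e ∈ G.edgeSet \ (starGraph c).edgeSet := by
  rw [Set.mem_sdiff, Set.mem_sdiff, rehang_mem_edgeSet_iff hcv hvw,
    rehang_mem_edgeSet_rehungStar_iff hcv.ne' hvw.ne]

theorem rehang_mk_center_of_ne {u : V} (huv : u ≠ v) (hvc : v ≠ c) :
    rehang c v w s(c, u) = s(c, u) :=
  rehang_of_ne (by grind) (by grind)

theorem cycEdges_rehungStar_mk (hvc : v ≠ c) (hvw : v ≠ w) {a b : V} (hab : a ≠ b)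
    (hac : a ≠ c) (hbc : b ≠ c) (hav : a ≠ v) (hbv : b ≠ v) :
    cycEdges (rehungStar c v w) s(a, b) ∩ (rehungStar c v w).edgeSet = {s(c, a), s(c, b)} := by
  rw [cycEdges_inter_edgeSet_of_adj_of_adj (x := c) (isAcyclic_rehungStar hvc hvw)
    (rehungStar_adj.2 (by grind)) (rehungStar_adj.2 (by grind)) hab, Sym2.eq_swap (a := a)]

theorem cycEdges_rehungStar_mk_center_leaf (hvc : v ≠ c) (hvw : v ≠ w) (hwc : w ≠ c) :
    cycEdges (rehungStar c v w) s(c, v) ∩ (rehungStar c v w).edgeSet =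
      {s(c, w), s(v, w)} := by
  rw [cycEdges_inter_edgeSet_of_adj_of_adj (x := w) (isAcyclic_rehungStar hvc hvw)
    (rehungStar_adj.2 (by grind)) (rehungStar_adj.2 (by grind)) hvc.symm, Sym2.eq_swap (a := w)]

theorem cycEdges_rehungStar_mk_leaf (hvc : v ≠ c) (hvw : v ≠ w) (hwc : w ≠ c) {b : V}
    (hbc : b ≠ c) (hbv : b ≠ v) (hbw : b ≠ w) :
    cycEdges (rehungStar c v w) s(v, b) ∩ (rehungStar c v w).edgeSet =
      {s(v, w), s(c, w), s(c, b)} := by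
  let p : (rehungStar c v w).Walk v b :=
    .cons (v := w) (rehungStar_adj.2 (by grind)) (.cons (v := c) (rehungStar_adj.2 (by grind))
      (.cons (rehungStar_adj.2 (by grind)) .nil))
  have hp : p.IsPath := by
    simp only [p, Walk.cons_isPath_iff, Walk.IsPath.nil, Walk.support_cons, Walk.support_nil,
      List.mem_cons, List.not_mem_nil]
    grind
  rw [cycEdges_inter_edgeSet (isAcyclic_rehungStar hvc hvw) hp (by rw [rehungStar_adj]; grind)]
  simp [p, Sym2.eq_swap (a := w) (b := c)]

theorem cycEdges_rehungStar_rehang_mk_leaf (hvc : v ≠ c) (hvw : v ≠ w) (hwc : w ≠ c) {b : V}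
    (hbc : b ≠ c) (hbv : b ≠ v) :
    cycEdges (rehungStar c v w) (rehang c v w s(v, b)) ∩ (rehungStar c v w).edgeSet =
      {s(v, w), s(c, w), s(c, b)} := by
  by_cases hbw : b = w
  · rw [hbw, rehang_mk_leaf_new, cycEdges_rehungStar_mk_center_leaf hvc hvw hwc]
    grind
  · rw [rehang_of_ne (by grind) (by grind), cycEdges_rehungStar_mk_leaf hvc hvw hwc hbc hbv hbw]

theorem cycEdges_rehungStar_rehang (hvc : v ≠ c) (hvw : v ≠ w) (hwc : w ≠ c)
    (he : ¬e.IsDiag) (hc : c ∉ e) :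
    cycEdges (rehungStar c v w) (rehang c v w e) ∩ (rehungStar c v w).edgeSet =
      (fun u => rehang c v w s(c, u)) '' {u | u ∈ e ∨ u = w ∧ v ∈ e} := by
  have spoke {u : V} (huv : u ≠ v) := rehang_mk_center_of_ne (w := w) huv hvc
  by_cases hv : v ∈ e
  · obtain ⟨b, rfl⟩ := hv
    simp only [Sym2.mk_isDiag_iff, Sym2.mem_iff, not_or] at he hc
    have hverts : {u | u ∈ s(v, b) ∨ u = w ∧ v ∈ s(v, b)} = {v, w, b} := by
      ext; grind
    rw [hverts, cycEdges_rehungStar_rehang_mk_leaf hvc hvw hwc (Ne.symm hc.2) (Ne.symm he)]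
    simp only [Set.image_insert_eq, Set.image_singleton, rehang_mk_center_leaf, spoke hvw.symm,
      spoke (Ne.symm he)]
  · induction e with
    | _ a b =>
      simp only [Sym2.mk_isDiag_iff, Sym2.mem_iff, not_or] at he hc hv
      have hverts : {u | u ∈ s(a, b) ∨ u = w ∧ v ∈ s(a, b)} = {a, b} := by
        ext; grind
      rw [hverts, rehang_of_ne (by grind) (by grind), cycEdges_rehungStar_mk hvc hvw he
        (Ne.symm hc.1) (Ne.symm hc.2) (Ne.symm hv.1) (Ne.symm hv.2)]
      simp only [Set.image_insert_eq, Set.image_singleton, spoke (Ne.symm hv.1),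
        spoke (Ne.symm hv.2)]

theorem cyclesIntersect_rehungStar_rehang (hvc : v ≠ c) (hvw : v ≠ w) (hwc : w ≠ c)
    (he : e ∈ G.edgeSet \ (starGraph c).edgeSet) (hf : f ∈ G.edgeSet \ (starGraph c).edgeSet) :
    cyclesIntersect (rehungStar c v w) (rehang c v w e) (rehang c v w f) ↔
      ∃ u, (u ∈ e ∨ u = w ∧ v ∈ e) ∧ (u ∈ f ∨ u = w ∧ v ∈ f) := by
  have cycEdges_eq {e} (he : e ∈ G.edgeSet \ (starGraph c).edgeSet) :=
    cycEdges_rehungStar_rehang hvc hvw hwc (not_isDiag_of_mem_edgeSet _ he.1)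
      (mem_edgeSet_sdiff_starGraph.1 he).2
  exact cyclesIntersect_iff_of_eq_image
    (fun _ _ h => Sym2.congr_right.1 ((rehang c v w).injective h)) (cycEdges_eq he) (cycEdges_eq hf)

theorem treeInterNum_starGraph_lt_rehungStar [Finite V] {b d : V} (hcv : G.Adj c v)
    (hvw : G.Adj v w) (hwc : w ≠ c) (hvb : G.Adj v b) (hwd : G.Adj w d) (hbc : b ≠ c)
    (hbw : b ≠ w) (hdc : d ≠ c) (hdv : d ≠ v) (hbd : b ≠ d) :
    treeInterNum G (starGraph c) < treeInterNum G (rehungStar c v w) := by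
  have hvc := hcv.ne'
  have hvw' := hvw.ne
  have hvb_mem : s(v, b) ∈ G.edgeSet \ (starGraph c).edgeSet :=
    mem_edgeSet_sdiff_starGraph.2 ⟨hvb, by grind⟩
  have hwd_mem : s(w, d) ∈ G.edgeSet \ (starGraph c).edgeSet :=
    mem_edgeSet_sdiff_starGraph.2 ⟨hwd, by grind⟩
  refine treeInterNum_lt_of_equiv (rehang c v w)
    (fun _ => rehang_mem_cycleEdges_iff hcv hvw) (fun e he f hf => ?_)
    hvb_mem hwd_mem (by grind) ?_ ?_
  · rw [cyclesIntersect_starGraph he hf, cyclesIntersect_rehungStar_rehang hvc hvw' hwc he hf]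
    exact fun ⟨u, hue, huf⟩ => ⟨u, .inl hue, .inl huf⟩
  · rw [cyclesIntersect_starGraph hvb_mem hwd_mem]
    grind
  · rw [cyclesIntersect_rehungStar_rehang hvc hvw' hwc hvb_mem hwd_mem]
    exact ⟨w, .inr ⟨rfl, Sym2.mem_mk_left v b⟩, .inl (Sym2.mem_mk_left w d)⟩

theorem treeInterNum_starGraph_eq_rehungStar (hcv : G.Adj c v) (hvw : G.Adj v w) (hwc : w ≠ c)
    (hv : ∀ u, G.Adj v u → u = c ∨ u = w) :
    treeInterNum G (starGraph c) = treeInterNum G (rehungStar c v w) := by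
  have mem_of_leaf_mem {e} (he : e ∈ G.edgeSet \ (starGraph c).edgeSet) (hve : v ∈ e) :
      w ∈ e := by
    obtain ⟨u, rfl⟩ := hve
    have hu := hv u he.1
    have hc := (mem_edgeSet_sdiff_starGraph.1 he).2
    grind
  refine treeInterNum_eq_of_equiv (rehang c v w)
    (fun _ => rehang_mem_cycleEdges_iff hcv hvw) fun e he f hf => ?_
  rw [cyclesIntersect_starGraph he hf,
    cyclesIntersect_rehungStar_rehang hcv.ne' hvw.ne hwc he hf]
  refine exists_congr fun u => and_congr ?_ ?_
  · exact (or_iff_left_of_imp fun ⟨hu, hve⟩ => hu ▸ mem_of_leaf_mem he hve).symm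
  · exact (or_iff_left_of_imp fun ⟨hu, hvf⟩ => hu ▸ mem_of_leaf_mem hf hvf).symm

end RehungStar

theorem deleteEdges_spokes_adj {V : Type*} {G : SimpleGraph V} {S : Set V} {v a b : V} :
    (G.deleteEdges {f | ∃ u, u ∉ S ∧ f = s(v, u)}).Adj a b ↔
      G.Adj a b ∧ (a = v → b ∈ S) ∧ (b = v → a ∈ S) := by
  simp only [deleteEdges_adj, Set.mem_ofPred_eq, exists_mk_eq_mk_iff (P := (· ∉ S))]
  grind

theorem exists_pair_notMem_of_card_add_one_lt {α : Type*} [Fintype α] {s : Finset α}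
    (hs : s.card + 1 < Fintype.card α) : ∃ b ∉ s, ∃ d ∉ s, b ≠ d := by
  classical
  have hcompl : 1 < sᶜ.card := by
    rw [Finset.card_compl]
    omega
  simpa only [Finset.mem_compl] using Finset.one_lt_card.1 hcompl

/-- Let `n > 4`, `G = K_n`, and `H` be `K_n` with the `n - 3` edges
joining `v₂` to all vertices other than `v₁, v₂, v₃` removed (so `v₂` has degree 2 in
`H`, adjacent only to `v₁` and `v₃`). Let `T₁` be the star spanning tree centered at
`v₁` and `T₂ = (T₁ - {(v₁,v₂)}) ∪ {(v₂,v₃)}`. Then `T₁` and `T₂` are spanning trees of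
both `G` and `H`, `∩_G(T₁) < ∩_G(T₂)`, and `∩_H(T₁) = ∩_H(T₂)`. -/
theorem stmt_16 {V : Type*} [Fintype V] (n : ℕ) (hn : Fintype.card V = n) (h4 : 4 < n)
    (v1 v2 v3 : V) (h12 : v1 ≠ v2) (h13 : v1 ≠ v3) (h23 : v2 ≠ v3)
    (H : SimpleGraph V)
    (hH : H = (⊤ : SimpleGraph V).deleteEdges
      {f | ∃ u, u ∉ ({v1, v2, v3} : Set V) ∧ f = s(v2, u)})
    (T₁ T₂ : SimpleGraph V)
    (hT₁ : T₁ = SimpleGraph.fromEdgeSet {f | ∃ u, u ≠ v1 ∧ f = s(v1, u)})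
    (hT₂ : T₂ = SimpleGraph.fromEdgeSet
      ({f | ∃ u, u ≠ v1 ∧ u ≠ v2 ∧ f = s(v1, u)} ∪ {s(v2, v3)})) :
    T₁ ≤ (⊤ : SimpleGraph V) ∧ T₂ ≤ (⊤ : SimpleGraph V) ∧ T₁ ≤ H ∧ T₂ ≤ H ∧
    T₁.IsTree ∧ T₂.IsTree ∧
    treeInterNum (⊤ : SimpleGraph V) T₁ < treeInterNum (⊤ : SimpleGraph V) T₂ ∧
    treeInterNum H T₁ = treeInterNum H T₂ := by
  subst hT₁ hT₂
  rw [← starGraph_eq_fromEdgeSet, ← rehungStar_eq_fromEdgeSet]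
  have hAdj {a b : V} : H.Adj a b ↔
      a ≠ b ∧ (a = v2 → b ∈ ({v1, v2, v3} : Set V)) ∧ (b = v2 → a ∈ ({v1, v2, v3} : Set V)) := by
    rw [hH, deleteEdges_spokes_adj, top_adj]
  have h12H : H.Adj v1 v2 := hAdj.2 (by grind)
  have h23H : H.Adj v2 v3 := hAdj.2 (by grind)
  have hstar : starGraph v1 ≤ H := fun a b hab => hAdj.2 (by rw [starGraph_adj] at hab; grind)
  refine ⟨le_top, le_top, hstar, rehungStar_le hstar h23H, isTree_starGraph v1,
    isTree_rehungStar h12.symm h23, ?_, ?_⟩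
  · classical
    obtain ⟨b, hb, d, hd, hbd⟩ := exists_pair_notMem_of_card_add_one_lt (s := {v1, v2, v3})
      ((Nat.add_le_add_right Finset.card_le_three 1).trans_lt (hn ▸ h4))
    simp only [Finset.mem_insert, Finset.mem_singleton, not_or] at hb hd
    exact treeInterNum_starGraph_lt_rehungStar h12 h23 h13.symm (Ne.symm hb.2.1)
      (Ne.symm hd.2.2) hb.1 hb.2.2 hd.1 hd.2.1 hbd
  · refine treeInterNum_starGraph_eq_rehungStar h12H h23H h13.symm fun u hu => ?_
    have := hAdj.1 hu
    grind
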